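/- arXiv:1807.05280 — 2 statements merged into one kernel-verified Lean document; each statement's English description precedes it below -/
import Mathlib

section
/- For all integers 1 ≤ ℓ ≤ n there is a constant c_{n,ℓ} > 0, depending only on n and ℓ, such that the following holds: if A ⊆ ℝ^ℓ and X ⊆ ℝ^n are finite sets with the property that for every x ∈ X there exists r > 0 such that for every ℓ-element subset I of {1,…,n} and every sign vector σ ∈ {−1,1}^ℓ one has x_I + rσ ∈ A, then |A| ≥ c_{n,ℓ} · |X|^{ℓ(2n−1)/(2n²)}. -/
/-!
Let `x` be uniformly distributed on `X`, let `r = r(x)` be a radius for `x`, and let `H` be Shannon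
entropy, so `H(x) = log |X|`.

* For a sign vector `s ∈ {-1,1}^n`, all `ℓ`-coordinate projections of `x + r s` lie in `A`, so
  Shearer's inequality gives `ℓ H(x + r s) ≤ n log |A|`.
* The points `x + r s` and `x - r s` determine `x` and both determine the class of `x` modulo
  `ℝ s`. Submodularity of entropy gives `H(x) + H(x mod s) ≤ H(x + r s) + H(x - r s)`.
* For a basis `s₁, …, sₙ` of `ℝ^n` consisting of sign vectors, the Loomis–Whitney inequality (again
  a case of Shearer's) gives `(n - 1) H(x) ≤ ∑ i, H(x mod sᵢ)`.

Together these yield `ℓ (2n - 1) log |X| ≤ 2 n² log |A|`, so the constant `1` works.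

Entropy is only needed for functions on a finite set with the uniform distribution; `ent` is that
entropy times the number of points, which keeps denominators away.
-/

open Finset

noncomputable section

/-- For `x ∈ ℝ^n` and an `ℓ`-element subset `I` of the coordinates, `coordRestrict x I h ∈ ℝ^ℓ`
is the vector of the coordinates of `x` indexed by `I`, in increasing order of index. -/
def coordRestrict {n ℓ : ℕ} (x : Fin n → ℝ) (I : Finset (Fin n)) (h : I.card = ℓ) :
    Fin ℓ → ℝ :=
  fun j => x ((I.orderIsoOfFin h j : I) : Fin n)

/-! ### Entropy of a function on a finite set -/

/-- The number of points of `X` on which `f` has the same value as at `x`. -/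
def fib {α β : Type*} (X : Finset α) (f : α → β) (x : α) : ℕ :=
  by classical exact #{y ∈ X | f y = f x}

/-- `|X|` times the Shannon entropy of `f` under the uniform distribution on `X`. -/
def ent {α β : Type*} (X : Finset α) (f : α → β) : ℝ :=
  ∑ x ∈ X, (Real.log #X - Real.log (fib X f x))

lemma fib_pos {α β : Type*} {X : Finset α} (f : α → β) {x : α} (hx : x ∈ X) :
    0 < fib X f x := by
  classical
  unfold fib
  exact Finset.card_pos.2 ⟨x, by simp [hx]⟩

lemma ent_mono {α β γ : Type*} {X : Finset α} {f : α → β} {g : α → γ}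
    (h : ∀ x ∈ X, ∀ y ∈ X, f x = f y → g x = g y) : ent X g ≤ ent X f := by
  classical
  refine Finset.sum_le_sum fun x hx => ?_
  have h1 : fib X f x ≤ fib X g x := by
    unfold fib
    refine Finset.card_le_card fun y hy => ?_
    simp only [mem_filter] at hy ⊢
    exact ⟨hy.1, h y hy.1 x hx hy.2⟩
  have h2 : Real.log (fib X f x) ≤ Real.log (fib X g x) :=
    Real.log_le_log (by exact_mod_cast fib_pos f hx) (by exact_mod_cast h1)
  linarith

lemma ent_of_injOn {α β : Type*} {X : Finset α} {f : α → β}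
    (h : ∀ x ∈ X, ∀ y ∈ X, f x = f y → x = y) : ent X f = #X * Real.log #X := by
  classical
  have : ∀ x ∈ X, Real.log #X - Real.log (fib X f x) = Real.log #X := by
    intro x hx
    have : fib X f x = 1 := by
      unfold fib
      rw [Finset.card_eq_one]
      refine ⟨x, ?_⟩
      ext y
      simp only [mem_filter, mem_singleton]
      exact ⟨fun hy => h y hy.1 x hx hy.2, fun hy => by subst hy; exact ⟨hx, rfl⟩⟩
    simp [this]
  rw [ent, Finset.sum_congr rfl this]
  simp

lemma ent_of_const {α β : Type*} {X : Finset α} {f : α → β}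
    (h : ∀ x ∈ X, ∀ y ∈ X, f x = f y) : ent X f = 0 := by
  classical
  refine Finset.sum_eq_zero fun x hx => ?_
  have : fib X f x = #X := by
    unfold fib
    rw [Finset.filter_true_of_mem fun y hy => h y hy x hx]
  simp [this]

/-- A set on which `f` is constant contributes at most `1` to `∑ x, 1 / fib X f x`. -/
lemma sum_inv_fib_le_one {α β : Type*} {X S : Finset α} {f : α → β} (hS : S ⊆ X)
    (h : ∀ x ∈ S, ∀ y ∈ S, f x = f y) : ∑ x ∈ S, (fib X f x : ℝ)⁻¹ ≤ 1 := by
  classical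
  rcases S.eq_empty_or_nonempty with rfl | hne
  · simp
  have hc : 0 < (#S : ℝ) := by exact_mod_cast hne.card_pos
  calc ∑ x ∈ S, (fib X f x : ℝ)⁻¹ ≤ ∑ x ∈ S, (#S : ℝ)⁻¹ := by
        refine Finset.sum_le_sum fun x hx => inv_anti₀ hc ?_
        have : #S ≤ fib X f x := by
          unfold fib
          refine Finset.card_le_card fun y hy => ?_
          simp only [mem_filter]
          exact ⟨hS hy, h y hy x hx⟩
        exact_mod_cast this
    _ = 1 := by
        rw [Finset.sum_const, nsmul_eq_mul]
        exact mul_inv_cancel₀ hc.ne'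

lemma ent_le_log_card {α β : Type*} {X : Finset α} {f : α → β} {B : Finset β}
    (h : ∀ x ∈ X, f x ∈ B) : ent X f ≤ #X * Real.log #B := by
  classical
  rcases X.eq_empty_or_nonempty with rfl | ⟨x₀, hx₀⟩
  · simp [ent]
  have hX : 0 < (#X : ℝ) := by exact_mod_cast Finset.card_pos.2 ⟨x₀, hx₀⟩
  have hB : 0 < (#B : ℝ) := by exact_mod_cast Finset.card_pos.2 ⟨_, h x₀ hx₀⟩
  have key : ∀ x ∈ X, Real.log #X - Real.log (fib X f x) - Real.log #B
      ≤ #X / #B * (fib X f x : ℝ)⁻¹ - 1 := by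
    intro x hx
    have hf : 0 < (fib X f x : ℝ) := by exact_mod_cast fib_pos f hx
    have := Real.log_le_sub_one_of_pos (x := #X / #B * (fib X f x : ℝ)⁻¹) (by positivity)
    rw [Real.log_mul (by positivity) (by positivity), Real.log_div hX.ne' hB.ne',
      Real.log_inv] at this
    linarith
  have hs : ∑ x ∈ X, (fib X f x : ℝ)⁻¹ ≤ #B := by
    rw [← Finset.sum_fiberwise_of_maps_to h]
    calc _ ≤ ∑ b ∈ B, (1 : ℝ) := by
          refine Finset.sum_le_sum fun b _ => sum_inv_fib_le_one (filter_subset _ _) ?_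
          intro x hx y hy
          simp only [mem_filter] at hx hy
          rw [hx.2, hy.2]
      _ = #B := by simp
  have h1 := Finset.sum_le_sum key
  rw [Finset.sum_sub_distrib, Finset.sum_sub_distrib (f := fun x => _ * _), ← Finset.mul_sum] at h1
  simp only [sum_const, nsmul_eq_mul, mul_one] at h1
  have h2 : #X / #B * ∑ x ∈ X, (fib X f x : ℝ)⁻¹ ≤ #X / #B * #B := by gcongr
  rw [div_mul_cancel₀ _ hB.ne'] at h2
  unfold ent
  linarith

/-- Submodularity of entropy: `u` is determined by the pair `(f, g)`, and `k` is determined by `f`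
as well as by `g`. -/
lemma ent_submod {α β γ δ ε : Type*} {X : Finset α} {f : α → β} {g : α → γ} {u : α → δ}
    {k : α → ε} (hu : ∀ x ∈ X, ∀ y ∈ X, f x = f y → g x = g y → u x = u y)
    (hf : ∀ x ∈ X, ∀ y ∈ X, f x = f y → k x = k y)
    (hg : ∀ x ∈ X, ∀ y ∈ X, g x = g y → k x = k y) :
    ent X u + ent X k ≤ ent X f + ent X g := by
  classical
  have key : ∀ x ∈ X, Real.log (fib X f x) + Real.log (fib X g x) - Real.log (fib X u x)
      - Real.log (fib X k x)
      ≤ fib X f x * fib X g x * ((fib X u x : ℝ)⁻¹ * (fib X k x : ℝ)⁻¹) - 1 := by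
    intro x hx
    have h1 : 0 < (fib X f x : ℝ) := by exact_mod_cast fib_pos f hx
    have h2 : 0 < (fib X g x : ℝ) := by exact_mod_cast fib_pos g hx
    have h3 : 0 < (fib X u x : ℝ) := by exact_mod_cast fib_pos u hx
    have h4 : 0 < (fib X k x : ℝ) := by exact_mod_cast fib_pos k hx
    have := Real.log_le_sub_one_of_pos
      (x := fib X f x * fib X g x * ((fib X u x : ℝ)⁻¹ * (fib X k x : ℝ)⁻¹)) (by positivity)
    rw [Real.log_mul (by positivity) (by positivity), Real.log_mul h1.ne' h2.ne',
      Real.log_mul (by positivity) (by positivity), Real.log_inv, Real.log_inv] at this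
    linarith
  -- Double counting: `fib X f x * fib X g x` counts the pairs `(a, b)` with `f a = f x` and
  -- `g b = g x`; for such pairs `k a = k b`.
  have hs : ∑ x ∈ X, (fib X f x * fib X g x * ((fib X u x : ℝ)⁻¹ * (fib X k x : ℝ)⁻¹)) ≤ #X := by
    calc ∑ x ∈ X, (fib X f x * fib X g x * ((fib X u x : ℝ)⁻¹ * (fib X k x : ℝ)⁻¹))
        = ∑ x ∈ X, ∑ a ∈ X, ∑ b ∈ X, (if f a = f x ∧ g b = g x then
            (fib X u x : ℝ)⁻¹ * (fib X k x : ℝ)⁻¹ else 0) := by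
          refine Finset.sum_congr rfl fun x _ => ?_
          have e1 : (fib X f x : ℝ) = ∑ a ∈ X, if f a = f x then 1 else 0 := by simp [fib]
          have e2 : (fib X g x : ℝ) = ∑ b ∈ X, if g b = g x then 1 else 0 := by simp [fib]
          rw [e1, e2, Finset.sum_mul_sum, Finset.sum_mul]
          simp only [Finset.sum_mul]
          refine Finset.sum_congr rfl fun a _ => Finset.sum_congr rfl fun b _ => ?_
          by_cases h1 : f a = f x <;> by_cases h2 : g b = g x <;> simp [h1, h2]
      _ = ∑ a ∈ X, ∑ b ∈ X, ∑ x ∈ X, (if f a = f x ∧ g b = g x then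
            (fib X u x : ℝ)⁻¹ * (fib X k x : ℝ)⁻¹ else 0) := by
          rw [Finset.sum_comm]
          exact Finset.sum_congr rfl fun a _ => Finset.sum_comm
      _ ≤ ∑ a ∈ X, ∑ b ∈ X, (if k b = k a then (fib X k a : ℝ)⁻¹ else 0) := by
          refine Finset.sum_le_sum fun a ha => Finset.sum_le_sum fun b hb => ?_
          rw [← Finset.sum_filter]
          have hk : ∀ x ∈ X.filter (fun x => f a = f x ∧ g b = g x), k x = k a ∧ k b = k a := by
            intro x hx
            simp only [mem_filter] at hx
            have e1 := hf a ha x hx.1 hx.2.1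
            have e2 := hg b hb x hx.1 hx.2.2
            exact ⟨e1.symm, e2.trans e1.symm⟩
          split_ifs with hab
          · calc _ = (∑ x ∈ X.filter (fun x => f a = f x ∧ g b = g x), (fib X u x : ℝ)⁻¹)
                    * (fib X k a : ℝ)⁻¹ := by
                  rw [Finset.sum_mul]
                  refine Finset.sum_congr rfl fun x hx => ?_
                  simp only [fib, (hk x hx).1]
              _ ≤ 1 * (fib X k a : ℝ)⁻¹ := by
                  gcongr
                  refine sum_inv_fib_le_one (filter_subset _ _) fun x hx y hy => ?_
                  simp only [mem_filter] at hx hy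
                  exact hu x hx.1 y hy.1 (hx.2.1.symm.trans hy.2.1) (hx.2.2.symm.trans hy.2.2)
              _ = _ := one_mul _
          · rw [Finset.sum_eq_zero]
            intro x hx
            exact absurd (hk x hx).2 hab
      _ = ∑ a ∈ X, (1 : ℝ) := by
          refine Finset.sum_congr rfl fun a ha => ?_
          rw [← Finset.sum_filter, Finset.sum_const, nsmul_eq_mul]
          have : (fib X k a : ℝ) ≠ 0 := by exact_mod_cast (fib_pos k ha).ne'
          change (fib X k a : ℝ) * _ = 1
          exact mul_inv_cancel₀ this
      _ = #X := by simp
  have h1 := Finset.sum_le_sum key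
  rw [Finset.sum_sub_distrib (g := fun _ => (1 : ℝ))] at h1
  have h2 : ∑ x ∈ X, (Real.log (fib X f x) + Real.log (fib X g x) - Real.log (fib X u x)
      - Real.log (fib X k x)) = ent X u + ent X k - (ent X f + ent X g) := by
    unfold ent
    rw [← Finset.sum_add_distrib, ← Finset.sum_add_distrib, ← Finset.sum_sub_distrib]
    exact Finset.sum_congr rfl fun x _ => by ring
  simp only [sum_const, nsmul_eq_mul, mul_one] at h1
  linarith

/-! ### Shearer's inequality -/

/-- Shearer's inequality for submodular set functions: if every index is covered by exactly `d`
members of a family, then `d` times the value on the full set is at most the sum over the family.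
Each `h (F k)` dominates the sum over `i ∈ F k` of the increments `h (Iic i) - h (Iio i)`. -/
lemma shearer_submod {n d : ℕ} {κ : Type*} (h : Finset (Fin n) → ℝ) (h0 : h ∅ = 0)
    (hsub : ∀ S T, h (S ∪ T) + h (S ∩ T) ≤ h S + h T) (t : Finset κ) (F : κ → Finset (Fin n))
    (hd : ∀ i, #{k ∈ t | i ∈ F k} = d) : d * h univ ≤ ∑ k ∈ t, h (F k) := by
  set w : Fin n → ℝ := fun i => h (Iic i) - h (Iio i) with hw
  have h1 : ∀ S, ∑ i ∈ S, w i ≤ h S := by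
    intro S
    induction S using Finset.induction_on_max with
    | empty => simp [h0]
    | insert a s hs ih =>
      have ha : a ∉ s := fun hm => lt_irrefl _ (hs a hm)
      rw [Finset.sum_insert ha]
      have := hsub (insert a s) (Iio a)
      have e1 : insert a s ∪ Iio a = Iic a := by
        ext i
        simp only [mem_union, mem_insert, mem_Iio, mem_Iic]
        have := hs i
        grind
      have e2 : insert a s ∩ Iio a = s := by
        ext i
        simp only [mem_inter, mem_insert, mem_Iio]
        have := hs i
        grind
      rw [e1, e2] at this
      simp only [hw] at ih ⊢
      linarith
  have h2 : ∑ i, w i = h univ := by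
    let g : ℕ → ℝ := fun m => h (univ.filter fun i : Fin n => (i : ℕ) < m)
    have e : ∀ i : Fin n, w i = g (i + 1) - g i := by
      intro i
      simp only [hw, g]
      congr 2
      · ext j; simp only [mem_Iic, mem_filter, mem_univ, true_and, Fin.le_def, Nat.lt_succ_iff]
      · ext j; simp only [mem_Iio, mem_filter, mem_univ, true_and, Fin.lt_def]
    rw [Finset.sum_congr rfl fun i _ => e i,
      Fin.sum_univ_eq_sum_range (fun m => g (m + 1) - g m), Finset.sum_range_sub]
    simp [g, h0]
  calc d * h univ = ∑ i, d * w i := by rw [← h2, Finset.mul_sum]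
    _ = ∑ i, ∑ k ∈ t, if i ∈ F k then w i else 0 := by
        refine Finset.sum_congr rfl fun i _ => ?_
        rw [← Finset.sum_filter, Finset.sum_const, hd i, nsmul_eq_mul]
    _ = ∑ k ∈ t, ∑ i ∈ F k, w i := by
        rw [Finset.sum_comm]
        refine Finset.sum_congr rfl fun k _ => ?_
        rw [← Finset.sum_filter]
        simp
    _ ≤ _ := Finset.sum_le_sum fun k _ => h1 _

/-- Shearer's inequality for the coordinates of an `n`-tuple of functions on `X`. -/
lemma shearer_ent {α : Type*} {n d : ℕ} {κ : Type*} (X : Finset α) (z : α → Fin n → ℝ)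
    (t : Finset κ) (F : κ → Finset (Fin n)) (hd : ∀ i, #{k ∈ t | i ∈ F k} = d) :
    d * ent X z ≤ ∑ k ∈ t, ent X (fun x => (F k).restrict (z x)) := by
  have := shearer_submod (fun S => ent X (fun x => S.restrict (z x))) ?_ ?_ t F hd
  · refine le_trans ?_ this
    refine mul_le_mul_of_nonneg_left (ent_mono fun x _ y _ hxy => ?_) (Nat.cast_nonneg d)
    funext i
    exact congrFun hxy ⟨i, mem_univ i⟩
  · exact ent_of_const fun x _ y _ => Subsingleton.elim _ _
  · intro S T
    refine ent_submod ?_ ?_ ?_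
    · intro x _ y _ h1 h2
      funext i
      rcases Finset.mem_union.1 i.2 with hi | hi
      · exact congrFun h1 ⟨i, hi⟩
      · exact congrFun h2 ⟨i, hi⟩
    · intro x _ y _ h1
      funext i
      exact congrFun h1 ⟨i, (Finset.mem_inter.1 i.2).1⟩
    · intro x _ y _ h1
      funext i
      exact congrFun h1 ⟨i, (Finset.mem_inter.1 i.2).2⟩

/-- If all projections of `z` to `ℓ` coordinates lie in `A`, then `ℓ H(z) ≤ n log |A|`. -/
lemma ent_le_of_proj {α : Type*} {n ℓ : ℕ} (hℓ : 1 ≤ ℓ) (hn : ℓ ≤ n) (X : Finset α)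
    (z : α → Fin n → ℝ) (A : Finset (Fin ℓ → ℝ))
    (hA : ∀ x ∈ X, ∀ (I : Finset (Fin n)) (h : I.card = ℓ), coordRestrict (z x) I h ∈ A) :
    ℓ * ent X z ≤ n * (#X * Real.log #A) := by
  obtain ⟨p, rfl⟩ : ∃ p, ℓ = p + 1 := ⟨ℓ - 1, by omega⟩
  obtain ⟨m, rfl⟩ : ∃ m, n = m + 1 := ⟨n - 1, by omega⟩
  have h1 := shearer_ent (d := m.choose p) X z (powersetCard (p + 1) univ) id ?_
  · have h2 : ∑ I ∈ powersetCard (p + 1) (univ : Finset (Fin (m + 1))),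
        ent X (fun x => (id I).restrict (z x)) ≤ ((m + 1).choose (p + 1) : ℝ) *
          (#X * Real.log #A) := by
      calc _ ≤ ∑ I ∈ powersetCard (p + 1) (univ : Finset (Fin (m + 1))),
            (#X * Real.log #A) := by
            refine Finset.sum_le_sum fun I hI => ?_
            have hc : I.card = p + 1 := (mem_powersetCard.1 hI).2
            refine le_trans (ent_mono (f := fun x => coordRestrict (z x) I hc) ?_)
              (ent_le_log_card fun x hx => hA x hx I hc)
            intro x _ y _ hxy
            funext i
            have := congrFun hxy ((I.orderIsoOfFin hc).symm i)
            simpa [coordRestrict] using this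
        _ = _ := by simp
    have h3 : ((m + 1 : ℕ) : ℝ) * m.choose p = (m + 1).choose (p + 1) * ((p + 1 : ℕ) : ℝ) := by
      exact_mod_cast Nat.add_one_mul_choose_eq m p
    have hc : 0 < (m.choose p : ℝ) := by exact_mod_cast Nat.choose_pos (by omega)
    refine le_of_mul_le_mul_left ?_ hc
    have h4 := mul_le_mul_of_nonneg_left (h1.trans h2) (Nat.cast_nonneg (α := ℝ) (p + 1))
    calc _ = ((p + 1 : ℕ) : ℝ) * (m.choose p * ent X z) := by ring
      _ ≤ _ := h4
      _ = ((m + 1).choose (p + 1) * ((p + 1 : ℕ) : ℝ)) * (#X * Real.log #A) := by ring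
      _ = _ := by rw [← h3]; ring
  · intro i
    have e : (powersetCard (p + 1) (univ : Finset (Fin (m + 1)))).filter (fun k => i ∈ id k)
        = (powersetCard p (univ.erase i)).image (insert i) := by
      ext S
      simp only [id, mem_filter, mem_powersetCard, subset_univ, true_and, mem_image]
      constructor
      · rintro ⟨hS, hi⟩
        refine ⟨S.erase i, ⟨erase_subset_erase _ (subset_univ _), ?_⟩, insert_erase hi⟩
        rw [card_erase_of_mem hi, hS]; rfl
      · rintro ⟨T, ⟨hT, hc⟩, rfl⟩
        have : i ∉ T := fun hi => by simpa using hT hi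
        rw [card_insert_of_notMem this, hc]
        exact ⟨rfl, mem_insert_self _ _⟩
    rw [e, card_image_of_injOn, card_powersetCard, card_erase_of_mem (mem_univ i)]
    · simp
    · intro S hS T hT hST
      rw [mem_coe, mem_powersetCard] at hS hT
      have h1 : i ∉ S := fun hi => by simpa using hS.1 hi
      have h2 : i ∉ T := fun hi => by simpa using hT.1 hi
      rw [← erase_insert h1, ← erase_insert h2]
      exact congrArg (fun U => U.erase i) hST

/-! ### A basis of sign vectors -/

/-- The sign vectors `s₀ = (1,…,1)` and `s_k = (1,…,1,-1,…,-1)` (with `k` ones) for `k > 0`; they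
form a basis of `ℝ^(m+1)`. -/
def signVec {m : ℕ} (k i : Fin (m + 1)) : ℝ := if k = 0 ∨ i < k then 1 else -1

/-- The coordinates of `x` with respect to the basis `signVec`. -/
def dualCoord {m : ℕ} (x : Fin (m + 1) → ℝ) : Fin (m + 1) → ℝ :=
  Fin.cases ((x 0 + x (Fin.last m)) / 2) fun j => (x j.castSucc - x j.succ) / 2

lemma signVec_eq {m : ℕ} (k i : Fin (m + 1)) : signVec k i = 1 ∨ signVec k i = -1 := by
  unfold signVec
  split_ifs <;> simp

/-- Moving along `signVec k` does not change the dual coordinates other than the `k`-th. -/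
lemma dualCoord_add {m : ℕ} (x : Fin (m + 1) → ℝ) (r : ℝ) {k j : Fin (m + 1)} (hj : j ≠ k) :
    dualCoord (fun i => x i + r * signVec k i) j = dualCoord x j := by
  induction j using Fin.cases with
  | zero =>
    have h1 : (0 : Fin (m + 1)) < k := Fin.pos_iff_ne_zero.2 hj.symm
    have h2 : ¬ Fin.last m < k := not_lt.2 (Fin.le_last k)
    simp only [dualCoord, Fin.cases_zero, signVec, h1, h2, hj.symm]
    simp only [or_true, or_false, if_true, if_false]
    ring
  | succ j =>
    have h1 : j.castSucc < k ↔ j.succ < k ∨ j.succ = k := by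
      rw [← le_iff_lt_or_eq, Fin.castSucc_lt_iff_succ_le]
    simp only [dualCoord, Fin.cases_succ, signVec, h1, hj, or_false]
    ring

lemma dualCoord_injective {m : ℕ} : Function.Injective (dualCoord (m := m)) := by
  intro x y h
  have h0 : (x 0 + x (Fin.last m)) / 2 = (y 0 + y (Fin.last m)) / 2 := congrFun h 0
  have hs : ∀ j : Fin m, (x j.castSucc - x j.succ) / 2 = (y j.castSucc - y j.succ) / 2 :=
    fun j => congrFun h j.succ
  have hc : ∀ i, x i - y i = x 0 - y 0 := by
    intro i
    induction i using Fin.induction with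
    | zero => rfl
    | succ i ih => linarith [hs i]
  funext i
  linarith [hc i, hc (Fin.last m)]

/-- The case `ℓ = n = m + 1` in entropy form: if `H(x + r s) ≤ N` for every sign vector `s`, then
`(2n - 1) H(x) ≤ 2 n N`, where all entropies (and `N`) are scaled by `|X|` as in `ent`. -/
lemma ent_cube {m : ℕ} (X : Finset (Fin (m + 1) → ℝ)) (r : (Fin (m + 1) → ℝ) → ℝ) (N : ℝ)
    (hN : ∀ s : Fin (m + 1) → ℝ, (∀ i, s i = 1 ∨ s i = -1) →
      ent X (fun x i => x i + r x * s i) ≤ N) :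
    (2 * m + 1) * (#X * Real.log #X) ≤ 2 * (m + 1) * N := by
  have hLW := shearer_ent (d := m) X dualCoord univ (fun k => univ.erase k) (by
    intro i
    have : (univ.filter fun k : Fin (m + 1) => i ∈ univ.erase k) = univ.erase i := by
      ext k; simp [eq_comm]
    rw [this, card_erase_of_mem (mem_univ i)]
    simp)
  rw [ent_of_injOn fun x _ y _ hxy => dualCoord_injective hxy] at hLW
  have hk : ∀ k : Fin (m + 1), ent X (fun x => (univ.erase k).restrict (dualCoord x))
      ≤ 2 * N - #X * Real.log #X := by
    intro k
    have h1 := hN (signVec k) (signVec_eq k)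
    have h2 := hN (fun i => - signVec k i) fun i => by
      rcases signVec_eq k i with h | h <;> simp [h]
    have h3 := ent_submod (X := X) (u := fun x => x)
      (f := fun x i => x i + r x * signVec k i) (g := fun x i => x i + r x * (- signVec k i))
      (k := fun x => (univ.erase k).restrict (dualCoord x)) ?_ ?_ ?_
    · rw [ent_of_injOn fun x _ y _ hxy => hxy] at h3
      linarith
    · intro x _ y _ e1 e2
      funext i
      have h4 : x i + r x * signVec k i = y i + r y * signVec k i := congrFun e1 i
      have h5 : x i + r x * -signVec k i = y i + r y * -signVec k i := congrFun e2 i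
      linarith
    · intro x _ y _ e
      funext j
      have hj := Finset.ne_of_mem_erase j.2
      have := congrFun (congrArg dualCoord e) j
      rwa [dualCoord_add _ _ hj, dualCoord_add _ _ hj] at this
    · intro x _ y _ e
      funext j
      have hj := Finset.ne_of_mem_erase j.2
      have := congrFun (congrArg dualCoord e) j
      simp only [mul_neg, ← neg_mul] at this
      rwa [dualCoord_add _ _ hj, dualCoord_add _ _ hj] at this
  have hsum := hLW.trans (Finset.sum_le_sum fun k _ => hk k)
  simp only [sum_const, card_univ, Fintype.card_fin, nsmul_eq_mul, Nat.cast_add,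
    Nat.cast_one] at hsum
  linarith

/-- the `(n,ℓ)`-dimensional main lemma. For all integers `1 ≤ ℓ ≤ n` there is
a constant `c_{n,ℓ} > 0` such that: if `A ⊆ ℝ^ℓ` and `X ⊆ ℝ^n` are finite sets with the property
that for every `x ∈ X` there is `r > 0` such that for every `ℓ`-element subset `I` of the
coordinates and every sign vector `σ ∈ {-1,1}^ℓ` one has `x_I + r σ ∈ A`, then
`|A| ≥ c_{n,ℓ} · |X|^(ℓ(2n-1)/(2n²))`. -/
theorem main_lemma_n_ell (n ℓ : ℕ) (hℓ : 1 ≤ ℓ) (hn : ℓ ≤ n) :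
    ∃ c : ℝ, 0 < c ∧ ∀ (A : Finset (Fin ℓ → ℝ)) (X : Finset (Fin n → ℝ)),
      (∀ x ∈ X, ∃ r : ℝ, 0 < r ∧ ∀ (I : Finset (Fin n)) (h : I.card = ℓ) (σ : Fin ℓ → ℝ),
        (∀ j, σ j = 1 ∨ σ j = -1) →
          (fun j => coordRestrict x I h j + r * σ j) ∈ A) →
      c * (X.card : ℝ) ^ (((ℓ : ℝ) * (2 * n - 1)) / (2 * (n : ℝ) ^ 2)) ≤ (A.card : ℝ) := by
  refine ⟨1, one_pos, fun A X hX => ?_⟩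
  obtain ⟨m, rfl⟩ : ∃ m, n = m + 1 := ⟨n - 1, by omega⟩
  have hℓ0 : (0 : ℝ) < ℓ := by exact_mod_cast hℓ
  have hm0 : (0 : ℝ) ≤ m := Nat.cast_nonneg m
  push_cast
  have hexp : 0 < ((ℓ : ℝ) * (2 * (m + 1) - 1)) / (2 * ((m : ℝ) + 1) ^ 2) := by
    have : (0 : ℝ) < 2 * (m + 1) - 1 := by linarith
    positivity
  rw [one_mul]
  rcases X.eq_empty_or_nonempty with rfl | ⟨x₀, hx₀⟩
  · simp [Real.zero_rpow hexp.ne']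
  choose! r _ hrA using hX
  have hXc : 0 < (#X : ℝ) := by exact_mod_cast Finset.card_pos.2 ⟨x₀, hx₀⟩
  have hAc : 0 < (#A : ℝ) := by
    obtain ⟨I, -, hI⟩ := Finset.exists_subset_card_eq (s := (univ : Finset (Fin (m + 1))))
      (n := ℓ) (by simpa using hn)
    exact_mod_cast Finset.card_pos.2 ⟨_, hrA x₀ hx₀ I hI (fun _ => 1) fun _ => Or.inl rfl⟩
  have hcube := ent_cube X r ((m + 1) / ℓ * (#X * Real.log #A)) (by
    intro s hs
    have := ent_le_of_proj hℓ hn X (fun x i => x i + r x * s i) A fun x hx I h =>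
      hrA x hx I h (coordRestrict s I h) fun j => hs _
    push_cast at this
    rw [div_mul_eq_mul_div, le_div_iff₀ hℓ0]
    linarith)
  have hlog : (2 * m + 1) * Real.log #X ≤ 2 * (m + 1) * ((m + 1) / ℓ * Real.log #A) := by
    refine le_of_mul_le_mul_left ?_ hXc
    linarith
  rw [← Real.log_le_log_iff (Real.rpow_pos_of_pos hXc _) hAc, Real.log_rpow hXc,
    div_mul_eq_mul_div, div_le_iff₀ (by positivity)]
  have h5 := mul_le_mul_of_nonneg_left hlog hℓ0.le
  have h6 : ℓ * (2 * (m + 1) * ((m + 1) / ℓ * Real.log #A))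
      = Real.log #A * (2 * ((m : ℝ) + 1) ^ 2) := by
    field_simp
  rw [h6] at h5
  linarith

end
end

section
/- Let 0 ≤ k < n be integers and let A, B ⊆ ℝ^n be sets with B bounded. Suppose that for every x ∈ A_δ there exists r ∈ (δ, 2] such that S_{k,δ}(x,r) ⊆ B_{2δ}, where δ ∈ (0,1). Then there is a constant C_{n,k} > 0, depending only on n and k, such that L_n(A_δ) ≤ C_{n,k} · δ^{(k−n)/(2n)} · L_n(B_{2δ}). -/
/-!
Write `U = B_{2δ}` and `θ = (n - k) / n`. Split the admissible centres by the dyadic range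
`(ρ, 2ρ]` of the radius, and localize to cubes of side `ρ`: let `E'` be the part of the centres in
such a cube and `W` the part of `U` in a concentric cube of side `9ρ`, which contains all the
neighbourhoods of skeletons involved.

Call a point rich if all `k`-dimensional coordinate slices of `W` through it have measure at least
`ρ^k`. Since `W` contains full `k`-faces of side `2r > 2ρ`, the vertices `x ± (r,…,r)`, moved along
the diagonal by less than `δ/2`, are rich for every `x ∈ E'` (`vertex_mem_richSet`). The proof
rests on three bounds.

* A Loomis–Whitney type inequality, proved in Finner's form by induction with Hölder, bounds the
  rich set `R`: `|R| ≤ (|W| / ρ^k)^(1/θ)` (`finner_marginal`, `volume_richSet_le`).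
* On each line in direction `(1,…,1)` the points of `E'` are midpoints of two points of `R`, so
  that `δ |E'| ≤ |R|²` there; together with the length bound `|E'| ≲ ρ`, this gives
  `|E'| ≲ (ρ/δ)^(1/2) |R|` (`midpoint_volume_le`, `diagonal_volume_le`).
* Trivially `|E'| ≤ ρ^n`.

Interpolating, `|E'| ≲ ρ^(n(1-θ)) ((ρ/δ)^(1/2) |R|)^θ ≲ (ρ/δ)^(θ/2) |W|` (`local_bound`). Averaging
over the positions of the cube removes the localization (`scale_bound`), and the sum over
`ρ = 2^(-j)` is a geometric series of size `δ^(-θ/2)`, where `-θ/2 = (k - n)/(2n)`.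
-/

open MeasureTheory Metric Set Filter
open scoped ENNReal

noncomputable section

/-- A `k`-face of the axes-parallel cube `x + [-r,r]^n`, indexed by the set `I` of free
coordinates and a sign choice `σ` for the remaining coordinates. -/
def sFace {n : ℕ} (x : Fin n → ℝ) (r : ℝ) (I : Finset (Fin n)) (σ : Fin n → Bool) :
    Set (Fin n → ℝ) :=
  {y | ∀ i, if i ∈ I then y i ∈ Set.Icc (x i - r) (x i + r)
            else y i = x i + (if σ i then r else -r)}

/-- The `k`-skeleton of the axes-parallel cube `x + [-r,r]^n`. -/
def skeleton (n k : ℕ) (x : Fin n → ℝ) (r : ℝ) : Set (Fin n → ℝ) :=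
  ⋃ (I : Finset (Fin n)) (_ : I.card = k) (σ : Fin n → Bool), sFace x r I σ

/-- Index type for the `k`-faces of an `n`-cube. -/
def FaceIdx (n k : ℕ) : Type := {p : Finset (Fin n) × (Fin n → Bool) // p.1.card = k}

/-- Average of `|f|` over a set `S`. -/
def setAvg {n : ℕ} (S : Set (Fin n → ℝ)) (f : (Fin n → ℝ) → ℝ) : ℝ :=
  (∫ y in S, |f y|) / (volume S).toReal

/-! ### A Loomis–Whitney type inequality for slices -/

/-- A Finner (uniform cover) inequality for the marginals of one function `f`, over an arbitrary set
`s` of integrated variables. When a variable `i` is added to `s`, the factors with `i ∈ I` do not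
depend on it, and the exponents of the remaining factors sum to `1`, so Hölder's inequality
applies to them. -/
theorem finner_marginal {n : ℕ} (F : Finset (Finset (Fin n))) (p : ℝ) (hp : 0 ≤ p)
    (hF : ∀ i : Fin n, ∑ _I ∈ F with i ∉ _I, p = 1)
    (f : (Fin n → ℝ) → ℝ≥0∞) (hf : Measurable f) (s : Finset (Fin n)) (z : Fin n → ℝ) :
    lmarginal (fun _ => volume) s
        (fun x => ∏ I ∈ F, (lmarginal (fun _ => (volume : Measure ℝ)) I f x) ^ p) z
      ≤ ∏ I ∈ F, (lmarginal (fun _ => (volume : Measure ℝ)) (s ∪ I) f z) ^ p := by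
  have hmeas : ∀ I : Finset (Fin n),
      Measurable (lmarginal (fun _ => (volume : Measure ℝ)) I f) := fun I => hf.lmarginal _
  induction s using Finset.induction_on generalizing z with
  | empty => simp
  | insert i s hi ih =>
    rw [lmarginal_insert _ (by fun_prop) hi]
    refine (lintegral_mono fun t => ih (Function.update z i t)).trans ?_
    have hsplit : ∀ t : ℝ, ∏ I ∈ F,
        (lmarginal (fun _ => (volume : Measure ℝ)) (s ∪ I) f (Function.update z i t)) ^ p
        = (∏ I ∈ F with i ∈ I, (lmarginal (fun _ => (volume : Measure ℝ)) (s ∪ I) f z) ^ p) *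
          ∏ I ∈ F with i ∉ I, (lmarginal (fun _ => (volume : Measure ℝ)) (s ∪ I) f
            (Function.update z i t)) ^ p := by
      intro t
      rw [← Finset.prod_filter_mul_prod_filter_not F (fun I => i ∈ I)]
      congr 1
      refine Finset.prod_congr rfl fun I hI => ?_
      rw [lmarginal_update_of_mem]
      exact Finset.mem_union_right _ (Finset.mem_filter.1 hI).2
    have hm2 : ∀ I : Finset (Fin n), Measurable fun t : ℝ =>
        lmarginal (fun _ => (volume : Measure ℝ)) (s ∪ I) f (Function.update z i t) :=
      fun I => (hmeas _).comp (measurable_update z)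
    simp_rw [hsplit]
    rw [lintegral_const_mul _ (by fun_prop),
      ← Finset.prod_filter_mul_prod_filter_not F (fun I => i ∈ I)
        (fun I => (lmarginal (fun _ => (volume : Measure ℝ)) (insert i s ∪ I) f z) ^ p)]
    refine mul_le_mul' (le_of_eq ?_) ?_
    · refine Finset.prod_congr rfl fun I hI => ?_
      rw [Finset.insert_union, Finset.insert_eq_of_mem]
      exact Finset.mem_union_right _ (Finset.mem_filter.1 hI).2
    · refine (ENNReal.lintegral_prod_norm_pow_le _ (fun I _ => (hm2 I).aemeasurable)
        (hF i) (fun _ _ => hp)).trans (le_of_eq ?_)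
      refine Finset.prod_congr rfl fun I hI => ?_
      rw [Finset.insert_union, lmarginal_insert _ hf]
      simp [hi, (Finset.mem_filter.1 hI).2]

theorem card_filter_notMem {n k : ℕ} (i : Fin n) :
    (((Finset.powersetCard k (Finset.univ : Finset (Fin n))).filter (fun I => i ∉ I)).card)
      = (n - 1).choose k := by
  have : (Finset.powersetCard k (Finset.univ : Finset (Fin n))).filter (fun I => i ∉ I)
      = Finset.powersetCard k (Finset.univ.erase i) := by
    ext I
    simp only [Finset.mem_filter, Finset.mem_powersetCard, Finset.subset_erase]
    tauto
  rw [this, Finset.card_powersetCard, Finset.card_erase_of_mem (Finset.mem_univ _)]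
  simp

/-- The points `x` such that, for every `k`-element set `I` of coordinates, the `k`-dimensional slice
of `W` through `x` parallel to the `I`-coordinates has measure at least `ρ ^ k`. -/
def richSet {n : ℕ} (k : ℕ) (ρ : ℝ) (W : Set (Fin n → ℝ)) : Set (Fin n → ℝ) :=
  {x | ∀ I : Finset (Fin n), I.card = k →
    ENNReal.ofReal (ρ ^ k) ≤ lmarginal (fun _ => (volume : Measure ℝ)) I (W.indicator 1) x}

theorem measurableSet_richSet {n : ℕ} (k : ℕ) (ρ : ℝ) {W : Set (Fin n → ℝ)}
    (hW : MeasurableSet W) : MeasurableSet (richSet k ρ W) := by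
  have hf : Measurable (W.indicator (1 : (Fin n → ℝ) → ℝ≥0∞)) := measurable_one.indicator hW
  simp only [richSet, ofPred_forall]
  exact MeasurableSet.iInter fun I => MeasurableSet.iInter fun _ =>
    measurableSet_le measurable_const (hf.lmarginal _)

/-- The Finner inequality for all `k`-element sets `I`, with exponent `1 / (n-1).choose k`, gives
`∫ ∏_I (marginal of W along I)^p ≤ |W|^(n/(n-k))`; restrict the integral to the rich set. -/
theorem volume_richSet_le {n k : ℕ} (hk : k < n) (ρ : ℝ) {W : Set (Fin n → ℝ)}
    (hW : MeasurableSet W) :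
    ENNReal.ofReal (ρ ^ k) * volume (richSet k ρ W) ^ (((n : ℝ) - k) / n) ≤ volume W := by
  have hf : Measurable (W.indicator (1 : (Fin n → ℝ) → ℝ≥0∞)) := measurable_one.indicator hW
  set f := W.indicator (1 : (Fin n → ℝ) → ℝ≥0∞) with hfdef
  set F := Finset.powersetCard k (Finset.univ : Finset (Fin n)) with hFdef
  have hc : 0 < (n - 1).choose k := Nat.choose_pos (by omega)
  have hc' : (0 : ℝ) < ((n - 1).choose k : ℝ) := by exact_mod_cast hc
  set p : ℝ := 1 / ((n - 1).choose k : ℝ) with hpdef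
  have hp : 0 < p := by positivity
  have hn : (0 : ℝ) < n := by exact_mod_cast (by omega : 0 < n)
  have hnk : (0 : ℝ) < (n : ℝ) - k := by
    have : (k : ℝ) < n := by exact_mod_cast hk
    linarith
  have hFcard : F.card = n.choose k := by simp [hFdef]
  have hpc : p * (n.choose k : ℝ) = n / ((n : ℝ) - k) := by
    have h1 := Nat.choose_mul_succ_eq (n - 1) k
    rw [Nat.sub_add_cancel (by omega : 1 ≤ n)] at h1
    have h2 : ((n - 1).choose k : ℝ) * n = n.choose k * ((n : ℝ) - k) := by
      rw [← Nat.cast_sub hk.le]; exact_mod_cast h1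
    rw [hpdef]; field_simp; linarith
  have key := finner_marginal F p hp.le (fun i => by
    rw [Finset.sum_const, card_filter_notMem, nsmul_eq_mul, hpdef]; field_simp) f hf
      Finset.univ 0
  have huniv : ∀ z, lmarginal (fun _ => (volume : Measure ℝ)) Finset.univ f z = volume W := by
    intro z
    rw [lmarginal_univ, ← volume_pi, hfdef, lintegral_indicator_one hW]
  have hR := measurableSet_richSet k ρ hW
  rw [lmarginal_univ, ← volume_pi] at key
  simp only [Finset.union_eq_left.2 (Finset.subset_univ _), huniv, Finset.prod_const,
    hFcard] at key
  have hlow : ((ENNReal.ofReal (ρ ^ k)) ^ p) ^ (n.choose k) * volume (richSet k ρ W) ≤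
      (volume W ^ p) ^ (n.choose k) := by
    refine le_trans ?_ key
    rw [← setLIntegral_const]
    refine (setLIntegral_mono' hR fun x hx => ?_).trans (setLIntegral_le_lintegral _ _)
    rw [← hFcard, ← Finset.prod_const]
    exact Finset.prod_le_prod' fun I hI =>
      ENNReal.rpow_le_rpow (hx I (Finset.mem_powersetCard.1 hI).2) hp.le
  rw [← ENNReal.rpow_natCast, ← ENNReal.rpow_natCast, ← ENNReal.rpow_mul, ← ENNReal.rpow_mul,
    hpc] at hlow
  have h3 := ENNReal.rpow_le_rpow hlow (by positivity : (0 : ℝ) ≤ ((n : ℝ) - k) / n)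
  have h4 : (n : ℝ) / (n - k) * ((n - k) / n) = 1 := by field_simp
  rwa [ENNReal.mul_rpow_of_nonneg _ _ (by positivity), ← ENNReal.rpow_mul, ← ENNReal.rpow_mul,
    h4, ENNReal.rpow_one, ENNReal.rpow_one] at h3

/-! ### Averaging over translates and the diagonal estimate -/

/-- Averaging over translates turns one-dimensional estimates on segments parallel to `(1,…,1)` into
`n`-dimensional ones, without any change of variables. -/
theorem lintegral_volume_line {n : ℕ} {E : Set (Fin n → ℝ)} (hE : MeasurableSet E) (a b : ℝ) :
    ∫⁻ x : Fin n → ℝ, volume {s : ℝ | s ∈ Icc a b ∧ (x + fun _ => s) ∈ E}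
      = ENNReal.ofReal (b - a) * volume E := by
  have hmap : Measurable fun q : (Fin n → ℝ) × ℝ => (q.1 + fun _ => q.2 : Fin n → ℝ) := by
    fun_prop
  have hM : MeasurableSet {q : (Fin n → ℝ) × ℝ | q.2 ∈ Icc a b ∧ (q.1 + fun _ => q.2) ∈ E} :=
    (measurable_snd measurableSet_Icc).inter (hmap hE)
  have h1 := Measure.prod_apply (μ := (volume : Measure (Fin n → ℝ)))
    (ν := (volume : Measure ℝ)) hM
  have h2 := Measure.prod_apply_symm (μ := (volume : Measure (Fin n → ℝ)))
    (ν := (volume : Measure ℝ)) hM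
  rw [h1] at h2
  refine h2.trans ?_
  have : ∀ s : ℝ, volume ((fun x : Fin n → ℝ => (x, s)) ⁻¹'
      {q : (Fin n → ℝ) × ℝ | q.2 ∈ Icc a b ∧ (q.1 + fun _ => q.2) ∈ E})
      = (Icc a b).indicator (fun _ => volume E) s := by
    intro s
    by_cases hs : s ∈ Icc a b
    · rw [indicator_of_mem hs, ← measure_preimage_add_right volume (fun _ => s) E]
      congr 1; ext x
      exact ⟨fun h => h.2, fun h => ⟨hs, h⟩⟩
    · rw [indicator_of_notMem hs]
      convert measure_empty (μ := (volume : Measure (Fin n → ℝ)))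
      ext x
      exact ⟨fun h => hs h.1, fun h => h.elim⟩
  simp_rw [this]
  rw [lintegral_indicator measurableSet_Icc, setLIntegral_const, Real.volume_Icc, mul_comm]

theorem lintegral_volume_inter_cube {n : ℕ} {E : Set (Fin n → ℝ)} (hE : MeasurableSet E)
    (a b : ℝ) :
    ∫⁻ z : Fin n → ℝ, volume (E ∩ {x | ∀ i, x i - z i ∈ Icc a b})
      = ENNReal.ofReal (b - a) ^ n * volume E := by
  set K : Set (Fin n → ℝ) := Set.pi univ fun _ => Icc a b with hK
  have hKm : MeasurableSet K := MeasurableSet.univ_pi fun _ => measurableSet_Icc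
  have hKv : volume K = ENNReal.ofReal (b - a) ^ n := by
    rw [hK, volume_pi_pi]; simp
  have hM : MeasurableSet {q : (Fin n → ℝ) × (Fin n → ℝ) | q.2 ∈ E ∧ q.2 - q.1 ∈ K} :=
    (measurable_snd hE).inter ((measurable_snd.sub measurable_fst) hKm)
  have h1 := Measure.prod_apply (μ := (volume : Measure (Fin n → ℝ)))
    (ν := (volume : Measure (Fin n → ℝ))) hM
  have h2 := Measure.prod_apply_symm (μ := (volume : Measure (Fin n → ℝ)))
    (ν := (volume : Measure (Fin n → ℝ))) hM
  rw [h1] at h2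
  refine Eq.trans (lintegral_congr fun z => ?_) (h2.trans ?_)
  · congr 1; ext x
    exact and_congr_right fun _ => ⟨fun h i _ => h i, fun h i => h i trivial⟩
  have : ∀ x : Fin n → ℝ, volume ((fun z : Fin n → ℝ => (z, x)) ⁻¹'
      {q : (Fin n → ℝ) × (Fin n → ℝ) | q.2 ∈ E ∧ q.2 - q.1 ∈ K})
      = E.indicator (fun _ => ENNReal.ofReal (b - a) ^ n) x := by
    intro x
    by_cases hx : x ∈ E
    · rw [indicator_of_mem hx, ← hKv,
        ← (Measure.measurePreserving_sub_left volume x).measure_preimage hKm.nullMeasurableSet]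
      congr 1; ext z
      exact ⟨fun h => h.2, fun h => ⟨hx, h⟩⟩
    · rw [indicator_of_notMem hx]
      convert measure_empty (μ := (volume : Measure (Fin n → ℝ)))
      ext z
      exact ⟨fun h => hx h.1, fun h => h.elim⟩
  simp_rw [this]
  rw [lintegral_indicator hE, setLIntegral_const]

/-- If every `x ∈ E` is the midpoint of two points around each of which `R` contains a `δ`-interval,
then `δ |E| ≤ |R|²`. For `x ∈ E` the set of `t` with `t ∈ R` and `2x - t ∈ R` contains an interval
of length `δ`, while the set of all pairs `(x, t)` with this property has measure `|R|² / 2`. -/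
theorem midpoint_volume_le {E R : Set ℝ} (hE : MeasurableSet E) (hR : MeasurableSet R) {δ : ℝ}
    (h : ∀ x ∈ E, ∃ r : ℝ, ∀ s : ℝ, |s| < δ / 2 → x + (r + s) ∈ R ∧ x + (-r + s) ∈ R) :
    ENNReal.ofReal δ * volume E ≤ volume R ^ 2 := by
  have hM : MeasurableSet {q : ℝ × ℝ | q.2 ∈ R ∧ 2 * q.1 - q.2 ∈ R} :=
    (measurable_snd hR).inter
      ((by fun_prop : Measurable fun q : ℝ × ℝ => 2 * q.1 - q.2) hR)
  have h1 := Measure.prod_apply (μ := (volume : Measure ℝ)) (ν := (volume : Measure ℝ)) hM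
  have h2 := Measure.prod_apply_symm (μ := (volume : Measure ℝ)) (ν := (volume : Measure ℝ)) hM
  calc ENNReal.ofReal δ * volume E = ∫⁻ _ in E, ENNReal.ofReal δ := by rw [setLIntegral_const]
    _ ≤ ∫⁻ x in E, volume (Prod.mk x ⁻¹' {q : ℝ × ℝ | q.2 ∈ R ∧ 2 * q.1 - q.2 ∈ R}) := by
        refine setLIntegral_mono' hE fun x hx => ?_
        obtain ⟨r, hr⟩ := h x hx
        have : ENNReal.ofReal δ = volume (Ioo (x + r - δ / 2) (x + r + δ / 2)) := by
          rw [Real.volume_Ioo]; congr 1; ring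
        rw [this]
        refine measure_mono fun t ht => ?_
        have hs : |t - x - r| < δ / 2 := by
          rw [abs_lt]; constructor <;> linarith [ht.1, ht.2]
        have a1 := (hr _ hs).1
        have a2 := (hr (-(t - x - r)) (by rwa [abs_neg])).2
        refine ⟨?_, ?_⟩
        · convert a1 using 1; ring
        · convert a2 using 1; ring
    _ ≤ ∫⁻ x, volume (Prod.mk x ⁻¹' {q : ℝ × ℝ | q.2 ∈ R ∧ 2 * q.1 - q.2 ∈ R}) :=
        setLIntegral_le_lintegral _ _
    _ = ∫⁻ t, volume ((fun x : ℝ => (x, t)) ⁻¹' {q : ℝ × ℝ | q.2 ∈ R ∧ 2 * q.1 - q.2 ∈ R}) := by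
        rw [← h1, h2]
    _ ≤ ∫⁻ t, R.indicator (fun _ => volume R) t := by
        refine lintegral_mono fun t => ?_
        by_cases ht : t ∈ R
        · rw [indicator_of_mem ht]
          calc _ ≤ volume ((fun x : ℝ => 2 * x) ⁻¹' ((fun y : ℝ => y + -t) ⁻¹' R)) :=
                measure_mono fun x hx => by
                  have := hx.2
                  simpa [sub_eq_add_neg] using this
            _ = ENNReal.ofReal |(2 : ℝ)⁻¹| * volume R := by
                rw [Real.volume_preimage_mul_left two_ne_zero, measure_preimage_add_right]
            _ ≤ 1 * volume R := by
                gcongr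
                rw [ENNReal.ofReal_le_one, abs_of_pos] <;> norm_num
            _ = volume R := one_mul _
        · refine (measure_mono (t := ∅) fun x hx => (ht hx.1).elim).trans (by simp)
    _ = volume R ^ 2 := by
        rw [lintegral_indicator hR, setLIntegral_const, sq]

/-- The midpoint estimate applied on segments of length `L` parallel to `(1,…,1)`: on each of them
`|E|² ≤ L |E| ≤ (L / δ) |R|²`. The factor `5` comes from the longer segment `[-2L, 3L]` that is
needed to contain the two opposite vertices. -/
theorem diagonal_volume_le {n : ℕ} {E R : Set (Fin n → ℝ)} (hE : MeasurableSet E)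
    (hR : MeasurableSet R) {δ L : ℝ} (hδ : 0 < δ) (hδL : δ ≤ L)
    (h : ∀ x ∈ E, ∃ r ∈ Icc 0 L, ∀ s : ℝ, |s| < δ / 2 →
      (x + fun _ => r + s) ∈ R ∧ (x + fun _ => -r + s) ∈ R) :
    volume E ≤ ENNReal.ofReal (5 * (L / δ) ^ (1 / 2 : ℝ)) * volume R := by
  have hL : 0 < L := hδ.trans_le hδL
  have hline : ∀ x : Fin n → ℝ,
      volume {s : ℝ | s ∈ Icc 0 L ∧ (x + fun _ => s) ∈ E} ≤
        ENNReal.ofReal ((L / δ) ^ (1 / 2 : ℝ)) *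
          volume {s : ℝ | s ∈ Icc (-2 * L) (3 * L) ∧ (x + fun _ => s) ∈ R} := by
    intro x
    have hmap : Measurable fun s : ℝ => (x + fun _ => s : Fin n → ℝ) := by fun_prop
    set E' := {s : ℝ | s ∈ Icc 0 L ∧ (x + fun _ => s) ∈ E} with hE'
    set R' := {s : ℝ | s ∈ Icc (-2 * L) (3 * L) ∧ (x + fun _ => s) ∈ R} with hR'
    have hE'm : MeasurableSet E' := measurableSet_Icc.inter (hmap hE)
    have hR'm : MeasurableSet R' := measurableSet_Icc.inter (hmap hR)
    have hmid := midpoint_volume_le hE'm hR'm (δ := δ) (by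
      rintro t ⟨ht, htE⟩
      obtain ⟨r, hr, hrs⟩ := h _ htE
      refine ⟨r, fun s hs => ?_⟩
      obtain ⟨u, v⟩ := hrs s hs
      rw [abs_lt] at hs
      refine ⟨⟨⟨?_, ?_⟩, ?_⟩, ⟨⟨?_, ?_⟩, ?_⟩⟩
      any_goals linarith [hr.1, hr.2, ht.1, ht.2]
      · convert u using 1; ext i; simp; ring
      · convert v using 1; ext i; simp; ring)
    have hlen : volume E' ≤ ENNReal.ofReal L := by
      refine (measure_mono (t := Icc 0 L) fun s hs => hs.1).trans ?_
      simp
    have hsq : volume E' ^ 2 ≤ ENNReal.ofReal (L / δ) * volume R' ^ 2 := by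
      have e1 : ENNReal.ofReal δ⁻¹ * ENNReal.ofReal δ = 1 := by
        rw [← ENNReal.ofReal_mul (by positivity), inv_mul_cancel₀ hδ.ne', ENNReal.ofReal_one]
      calc volume E' ^ 2 = volume E' * (ENNReal.ofReal δ⁻¹ * ENNReal.ofReal δ * volume E') := by
            rw [e1, one_mul, sq]
        _ ≤ ENNReal.ofReal L * (ENNReal.ofReal δ⁻¹ * volume R' ^ 2) := by
            rw [mul_assoc]; gcongr
        _ = _ := by
            rw [div_eq_mul_inv, ENNReal.ofReal_mul hL.le, mul_assoc]
    have := ENNReal.rpow_le_rpow hsq (by norm_num : (0 : ℝ) ≤ 1 / 2)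
    rw [ENNReal.mul_rpow_of_nonneg _ _ (by norm_num), ← ENNReal.rpow_natCast,
      ← ENNReal.rpow_natCast, ← ENNReal.rpow_mul, ← ENNReal.rpow_mul,
      ENNReal.ofReal_rpow_of_pos (by positivity)] at this
    norm_num at this ⊢
    exact this
  have hintegral := lintegral_mono (μ := (volume : Measure (Fin n → ℝ))) hline
  have e5 : 3 * L - -2 * L = L * 5 := by ring
  rw [lintegral_const_mul' _ _ ENNReal.ofReal_ne_top, lintegral_volume_line hE,
    lintegral_volume_line hR, sub_zero, e5, ENNReal.ofReal_mul hL.le, mul_assoc,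
    mul_left_comm, ENNReal.mul_le_mul_iff_right (by simpa using hL) ENNReal.ofReal_ne_top] at hintegral
  refine hintegral.trans (le_of_eq ?_)
  rw [mul_comm (5 : ℝ), ENNReal.ofReal_mul (by positivity), mul_assoc]

/-! ### From skeletons to rich sets, and the sum over scales -/

/-- The two opposite vertices `x ± (r,…,r)`, moved along the diagonal by less than `δ / 2`, are rich:
in every direction `I` a translate of a full `k`-face through them lies in `W`. -/
theorem vertex_mem_richSet {n k : ℕ} {x : Fin n → ℝ} {r ρ δ : ℝ} (hρ : 0 < ρ) (hr : ρ < r)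
    {W : Set (Fin n → ℝ)}
    (hsub : thickening (δ / 2) (skeleton n k x r) ⊆ W) (b : Bool) {s : ℝ} (hs : |s| < δ / 2) :
    (x + fun _ => (if b then r else -r) + s) ∈ richSet k ρ W := by
  intro I hI
  have hδ : 0 < δ / 2 := (abs_nonneg s).trans_lt hs
  set y : Fin n → ℝ := x + fun _ => (if b then r else -r) + s with hy
  set K : Set (I → ℝ) := Set.pi univ fun i => Icc (x i - r) (x i + r) with hK
  have hKm : MeasurableSet K := MeasurableSet.univ_pi fun _ => measurableSet_Icc
  have hKv : ENNReal.ofReal (ρ ^ k) ≤ volume K := by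
    rw [hK, volume_pi_pi]
    simp only [Real.volume_Icc, add_sub_sub_cancel, Finset.prod_const, Finset.card_univ,
      Fintype.card_coe, hI]
    rw [ENNReal.ofReal_pow hρ.le]
    gcongr
    linarith
  refine hKv.trans ?_
  rw [lmarginal, ← volume_pi, ← lintegral_indicator_one hKm]
  refine lintegral_mono fun w => ?_
  by_cases hw : w ∈ K
  · have hmem : Function.updateFinset y I w ∈ W := by
      refine hsub (mem_thickening_iff.2
        ⟨Function.updateFinset (x + fun _ => (if b then r else -r)) I w, ?_, ?_⟩)
      · simp only [skeleton, mem_iUnion]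
        refine ⟨I, hI, fun _ => b, fun i => ?_⟩
        by_cases hi : i ∈ I
        · simpa [hi, Function.updateFinset] using hw ⟨i, hi⟩ trivial
        · simp [hi, Function.updateFinset]
      · refine lt_of_le_of_lt ((dist_pi_le_iff (abs_nonneg s)).2 fun i => ?_) hs
        by_cases hi : i ∈ I
        · simp [hi, Function.updateFinset]
        · simp [hi, Function.updateFinset, hy, ← add_assoc]
    simp [hw, hmem]
  · simp [hw]

/-- The estimate inside a cube of side `ρ`, for centres with radius in `(ρ, 2ρ]`. With
`θ = (n - k) / n`, it interpolates between the trivial bound `|E'| ≤ ρ ^ n` (exponent `1 - θ`) and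
the bound by the rich set (exponent `θ`); the powers of `ρ` produced by the two cancel. -/
theorem local_bound {n k : ℕ} (hk : k < n) {E U : Set (Fin n → ℝ)} (hE : MeasurableSet E)
    (hU : MeasurableSet U) {δ ρ : ℝ} (hδ : 0 < δ) (hδρ : δ ≤ 2 * ρ)
    (h : ∀ x ∈ E, ∃ r ∈ Ioc ρ (2 * ρ), thickening (δ / 2) (skeleton n k x r) ⊆ U)
    (z : Fin n → ℝ) :
    volume (E ∩ {x | ∀ i, x i - z i ∈ Icc 0 ρ}) ≤
      ENNReal.ofReal ((5 * (2 * ρ / δ) ^ (1 / 2 : ℝ)) ^ (((n : ℝ) - k) / n)) *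
        volume (U ∩ {x | ∀ i, x i - z i ∈ Icc (-4 * ρ) (5 * ρ)}) := by
  have hρ : 0 < ρ := by linarith
  have hn : (0 : ℝ) < n := by exact_mod_cast (by omega : 0 < n)
  have hnk : (0 : ℝ) < (n : ℝ) - k := by
    have : (k : ℝ) < n := by exact_mod_cast hk
    linarith
  have hcube : ∀ a b : ℝ, MeasurableSet {x : Fin n → ℝ | ∀ i, x i - z i ∈ Icc a b} := by
    intro a b
    simp only [ofPred_forall]
    exact MeasurableSet.iInter fun i =>
      (by fun_prop : Measurable fun x : Fin n → ℝ => x i - z i) measurableSet_Icc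
  set E' := E ∩ {x | ∀ i, x i - z i ∈ Icc 0 ρ} with hE'
  set W := U ∩ {x | ∀ i, x i - z i ∈ Icc (-4 * ρ) (5 * ρ)} with hW'
  have hE'm : MeasurableSet E' := hE.inter (hcube _ _)
  have hW : MeasurableSet W := hU.inter (hcube _ _)
  have hdiag := diagonal_volume_le (L := 2 * ρ) hE'm (measurableSet_richSet k ρ hW) hδ hδρ (by
    rintro x ⟨hx, hxz⟩
    obtain ⟨r, hr, hsub⟩ := h x hx
    have hsubW : thickening (δ / 2) (skeleton n k x r) ⊆ W := by
      refine fun y hy => ⟨hsub hy, fun i => ?_⟩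
      obtain ⟨w, hw, hyw⟩ := mem_thickening_iff.1 hy
      simp only [skeleton, mem_iUnion] at hw
      obtain ⟨I, -, σ, hσ⟩ := hw
      have hwi : w i ∈ Icc (x i - r) (x i + r) := by
        have h0 := hσ i
        have hr0 : 0 < r := hρ.trans hr.1
        split_ifs at h0
        · exact h0
        · rw [h0]; constructor <;> linarith
        · rw [h0]; constructor <;> linarith
      have hyi := abs_lt.1 (Real.dist_eq _ _ ▸ (dist_le_pi_dist y w i).trans_lt hyw)
      have hxi := hxz i
      constructor <;> linarith [hwi.1, hwi.2, hyi.1, hyi.2, hxi.1, hxi.2, hr.1, hr.2]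
    refine ⟨r, ⟨by linarith [hr.1], hr.2⟩, fun s hs => ⟨?_, ?_⟩⟩
    · simpa using vertex_mem_richSet hρ hr.1 hsubW true hs
    · simpa using vertex_mem_richSet hρ hr.1 hsubW false hs)
  have hrich := volume_richSet_le hk ρ hW
  have hsize : volume E' ≤ ENNReal.ofReal (ρ ^ n) := by
    refine (measure_mono (t := Set.pi univ fun i => Icc (z i) (z i + ρ))
      fun x hx i _ => ?_).trans ?_
    · have := hx.2 i
      constructor <;> linarith [this.1, this.2]
    · rw [volume_pi_pi]; simp [ENNReal.ofReal_pow hρ.le]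
  set θ : ℝ := ((n : ℝ) - k) / n with hθ
  have hθ0 : 0 ≤ θ := by positivity
  have hθ1 : 0 ≤ 1 - θ := by
    have : 1 - θ = k / n := by rw [hθ]; field_simp; ring
    rw [this]; positivity
  have hpow : ENNReal.ofReal (ρ ^ n) ^ (1 - θ) = ENNReal.ofReal (ρ ^ k) := by
    rw [ENNReal.ofReal_rpow_of_pos (by positivity), ← Real.rpow_natCast, ← Real.rpow_mul hρ.le,
      ← Real.rpow_natCast]
    congr 2
    rw [hθ]; field_simp; ring
  calc volume E' = volume E' ^ (1 - θ) * volume E' ^ θ := by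
        rw [← ENNReal.rpow_add_of_nonneg _ _ hθ1 hθ0, sub_add_cancel, ENNReal.rpow_one]
    _ ≤ ENNReal.ofReal (ρ ^ n) ^ (1 - θ) *
        (ENNReal.ofReal (5 * (2 * ρ / δ) ^ (1 / 2 : ℝ)) * volume (richSet k ρ W)) ^ θ :=
        mul_le_mul' (ENNReal.rpow_le_rpow hsize hθ1) (ENNReal.rpow_le_rpow hdiag hθ0)
    _ = ENNReal.ofReal ((5 * (2 * ρ / δ) ^ (1 / 2 : ℝ)) ^ θ) *
        (ENNReal.ofReal (ρ ^ k) * volume (richSet k ρ W) ^ θ) := by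
        rw [hpow, ENNReal.mul_rpow_of_nonneg _ _ hθ0, ENNReal.ofReal_rpow_of_pos (by positivity)]
        ring
    _ ≤ _ := by gcongr

/-- Integrating `local_bound` over all positions `z` of the cube; the ratio of the sides of the two
cubes there gives the factor `9 ^ n`. -/
theorem scale_bound {n k : ℕ} (hk : k < n) {E U : Set (Fin n → ℝ)} (hE : MeasurableSet E)
    (hU : MeasurableSet U) {δ ρ : ℝ} (hδ : 0 < δ) (hδρ : δ ≤ 2 * ρ)
    (h : ∀ x ∈ E, ∃ r ∈ Ioc ρ (2 * ρ), thickening (δ / 2) (skeleton n k x r) ⊆ U) :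
    volume E ≤ ENNReal.ofReal ((5 * (2 * ρ / δ) ^ (1 / 2 : ℝ)) ^ (((n : ℝ) - k) / n) * 9 ^ n) *
      volume U := by
  have hρ : 0 < ρ := by linarith
  have hintegral := lintegral_mono (μ := (volume : Measure (Fin n → ℝ)))
    (local_bound hk hE hU hδ hδρ h)
  have e9 : 5 * ρ - -4 * ρ = ρ * 9 := by ring
  have h0 : ENNReal.ofReal ρ ^ n ≠ 0 := pow_ne_zero _ (by simpa using hρ)
  have h1 : ENNReal.ofReal ρ ^ n ≠ ⊤ := ENNReal.pow_ne_top ENNReal.ofReal_ne_top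
  rw [lintegral_const_mul' _ _ ENNReal.ofReal_ne_top, lintegral_volume_inter_cube hE,
    lintegral_volume_inter_cube hU, sub_zero, e9, ENNReal.ofReal_mul hρ.le, mul_pow, mul_assoc,
    mul_left_comm, ENNReal.mul_le_mul_iff_right h0 h1] at hintegral
  refine hintegral.trans (le_of_eq ?_)
  rw [ENNReal.ofReal_mul (by positivity), ENNReal.ofReal_pow (by norm_num), mul_assoc]

/-- The `δ / 2`-neighbourhood of a skeleton is stable under moving the centre by less than `δ / 2`, at
the cost of passing to the `δ`-neighbourhood. -/
theorem skeleton_thickening_shift {n k : ℕ} {x x' : Fin n → ℝ} {r δ : ℝ}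
    (hx : dist x x' < δ / 2) :
    thickening (δ / 2) (skeleton n k x r) ⊆ thickening δ (skeleton n k x' r) := by
  intro y hy
  obtain ⟨w, hw, hyw⟩ := mem_thickening_iff.1 hy
  refine mem_thickening_iff.2 ⟨w + (x' - x), ?_, ?_⟩
  · simp only [skeleton, mem_iUnion] at hw ⊢
    obtain ⟨I, hI, σ, hσ⟩ := hw
    refine ⟨I, hI, σ, fun i => ?_⟩
    have h0 := hσ i
    by_cases hi : i ∈ I
    · simp only [hi, if_true, Pi.add_apply, Pi.sub_apply] at h0 ⊢
      constructor <;> linarith [h0.1, h0.2]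
    · simp only [hi, if_false, Pi.add_apply, Pi.sub_apply] at h0 ⊢
      linarith
  · have : dist w (w + (x' - x)) = dist x x' := by
      rw [dist_eq_norm, dist_eq_norm]; congr 1; abel
    linarith [dist_triangle y w (w + (x' - x))]

theorem exists_dyadic {r : ℝ} (hr : 0 < r) (hr2 : r ≤ 2) :
    ∃ j : ℕ, r ∈ Ioc ((1 / 2 : ℝ) ^ j) (2 * (1 / 2 : ℝ) ^ j) := by
  obtain ⟨j, h1, h2⟩ := exists_nat_pow_near_of_lt_one (x := r / 2) (y := (1 / 2 : ℝ))
    (by linarith) (by linarith) (by norm_num) (by norm_num)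
  rw [pow_succ] at h1
  exact ⟨j, by linarith, by linarith⟩

/-- Let `A, B ⊆ ℝ^n` with `B` bounded and `δ ∈ (0,1)`. If for every
`x ∈ A_δ` there is `r ∈ (δ, 2]` with `S_{k,δ}(x,r) ⊆ B_{2δ}`, then
`L_n(A_δ) ≤ C_{n,k} · δ^((k-n)/(2n)) · L_n(B_{2δ})`, where `C_{n,k} > 0` depends only on
`n` and `k`. -/
theorem volume_nbhd_bound (n k : ℕ) (hk : k < n) :
    ∃ C : ℝ, 0 < C ∧ ∀ (A B : Set (Fin n → ℝ)), Bornology.IsBounded B →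
      ∀ δ : ℝ, δ ∈ Set.Ioo (0:ℝ) 1 →
      (∀ x ∈ Metric.thickening δ A, ∃ r ∈ Set.Ioc δ 2,
        Metric.thickening δ (skeleton n k x r) ⊆ Metric.thickening (2 * δ) B) →
      MeasureTheory.volume (Metric.thickening δ A) ≤
        ENNReal.ofReal (C * δ ^ (((k : ℝ) - n) / (2 * n))) *
          MeasureTheory.volume (Metric.thickening (2 * δ) B) := by
  have hn : (0 : ℝ) < n := by exact_mod_cast (by omega : 0 < n)
  have hnk : (0 : ℝ) < (n : ℝ) - k := by
    have : (k : ℝ) < n := by exact_mod_cast hk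
    linarith
  set θ : ℝ := ((n : ℝ) - k) / n with hθ
  have hθ0 : 0 < θ := by positivity
  set q : ℝ := (1 / 2 : ℝ) ^ (θ / 2) with hq
  have hq0 : 0 < q := by positivity
  have hq1 : q < 1 := Real.rpow_lt_one (by norm_num) (by norm_num) (by positivity)
  have hq1' : 0 < (1 - q)⁻¹ := inv_pos.2 (by linarith)
  refine ⟨(5 * 2 ^ (1 / 2 : ℝ)) ^ θ * 9 ^ n * (1 - q)⁻¹, by positivity, ?_⟩
  rintro A B - δ ⟨hδ, -⟩ h
  set U := thickening (2 * δ) B with hU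
  have hexp : ((k : ℝ) - n) / (2 * n) = -(θ / 2) := by rw [hθ]; field_simp; ring
  -- The centres with radius in the `j`-th dyadic range need not form a measurable set;
  -- their open `δ / 2`-neighbourhood is used instead.
  let E : ℕ → Set (Fin n → ℝ) := fun j => thickening (δ / 2)
    {x | ∃ r ∈ Ioc ((1 / 2 : ℝ) ^ j) (2 * (1 / 2 : ℝ) ^ j), δ < r ∧
      thickening δ (skeleton n k x r) ⊆ U}
  have hcover : thickening δ A ⊆ ⋃ j, E j := by
    intro x hx
    obtain ⟨r, hr, hsub⟩ := h x hx
    obtain ⟨j, hj⟩ := exists_dyadic (hδ.trans hr.1) hr.2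
    exact mem_iUnion.2 ⟨j, self_subset_thickening (by positivity) _ ⟨r, hj, hr.1, hsub⟩⟩
  have hEj : ∀ j, volume (E j) ≤
      ENNReal.ofReal ((5 * 2 ^ (1 / 2 : ℝ)) ^ θ * 9 ^ n * δ ^ (-(θ / 2)) * q ^ j) * volume U := by
    intro j
    -- A nonempty `E j` forces `δ ≤ 2 * (1/2)^j`, as `scale_bound` requires.
    rcases (E j).eq_empty_or_nonempty with he | ⟨y, hy⟩
    · simp [he]
    obtain ⟨y', ⟨r, hr, hδr, -⟩, -⟩ := mem_thickening_iff.1 hy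
    have := scale_bound hk (E := E j) isOpen_thickening.measurableSet
      (isOpen_thickening (δ := 2 * δ) (E := B)).measurableSet hδ (hδr.le.trans hr.2) (by
        intro x hx
        obtain ⟨x', ⟨r, hr, -, hsub⟩, hxx⟩ := mem_thickening_iff.1 hx
        exact ⟨r, hr, (skeleton_thickening_shift hxx).trans hsub⟩)
    refine this.trans (le_of_eq ?_)
    congr 2
    have e1 : (2 * (1 / 2 : ℝ) ^ j / δ) ^ (1 / 2 : ℝ)
        = 2 ^ (1 / 2 : ℝ) * ((1 / 2 : ℝ) ^ j) ^ (1 / 2 : ℝ) * δ ^ (-(1 / 2) : ℝ) := by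
      rw [Real.div_rpow (by positivity) hδ.le, Real.mul_rpow (by norm_num) (by positivity),
        Real.rpow_neg hδ.le, div_eq_mul_inv]
    have e2 : (((1 / 2 : ℝ) ^ j) ^ (1 / 2 : ℝ)) ^ θ = q ^ j := by
      rw [hq, ← Real.rpow_natCast, ← Real.rpow_natCast, ← Real.rpow_mul (by norm_num),
        ← Real.rpow_mul (by norm_num), ← Real.rpow_mul (by norm_num)]
      congr 1; ring
    have e3 : (δ ^ (-(1 / 2) : ℝ)) ^ θ = δ ^ (-(θ / 2)) := by
      rw [← Real.rpow_mul hδ.le]; congr 1; ring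
    rw [e1, ← hθ, ← mul_assoc, ← mul_assoc, Real.mul_rpow (by positivity) (by positivity),
      Real.mul_rpow (by positivity) (by positivity), e2, e3]
    ring
  calc volume (thickening δ A) ≤ ∑' j, volume (E j) :=
        (measure_mono hcover).trans (measure_iUnion_le _)
    _ ≤ ∑' j : ℕ, ENNReal.ofReal
          ((5 * 2 ^ (1 / 2 : ℝ)) ^ θ * 9 ^ n * δ ^ (-(θ / 2)) * q ^ j) * volume U :=
        ENNReal.tsum_le_tsum hEj
    _ = _ := by
        rw [ENNReal.tsum_mul_right, ← ENNReal.ofReal_tsum_of_nonneg (fun j => by positivity)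
          ((summable_geometric_of_lt_one hq0.le hq1).mul_left _), tsum_mul_left,
          tsum_geometric_of_lt_one hq0.le hq1, hexp]
        congr 2; ring

end
end
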